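/- Let d ≥ 3 be an integer and let T be a set of three affinely independent points in ℕ_0^d. Then the 2-completion of T satisfies E_2^∞(T) = Λ(T) ∩ ℕ_0^d. -/

import Mathlib

open MeasureTheory
open scoped Classical ENNReal

noncomputable section

/-- The `d`-dimensional torus, modelled as `d` copies of `ℝ/ℤ`,
whose product `volume` measure is the normalized Haar measure. -/
abbrev Torus (d : ℕ) := Fin d → AddCircle (1 : ℝ)

/-- The character `z ↦ z^α` on the torus. -/
def torusChar {d : ℕ} (α : Fin d → ℤ) (x : Torus d) : ℂ :=
  ∏ j, fourier (α j) (x j)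

/-- The trigonometric polynomial with frequencies in `F` and coefficients `a`. -/
def trigPoly {d : ℕ} (F : Finset (Fin d → ℤ)) (a : (Fin d → ℤ) → ℂ) (x : Torus d) : ℂ :=
  ∑ α ∈ F, a α * torusChar α x

/-- The set `ℕ₀^d` of multi-indices with nonnegative entries. -/
def NN (d : ℕ) : Set (Fin d → ℤ) := {α | ∀ j, 0 ≤ α j}

/-- `Λ` is a coset in `ℤ^d`, i.e. a translate of a subgroup. -/
def IsCoset {d : ℕ} (Λ : Set (Fin d → ℤ)) : Prop :=
  ∃ (x : Fin d → ℤ) (H : AddSubgroup (Fin d → ℤ)),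
    Λ = (x + ·) '' (H : Set (Fin d → ℤ))

/-- `Λ` is a contractive projection set for `L^p(𝕋^d)`:
the projection onto frequencies in `Λ` is contractive on trigonometric polynomials. -/
def IsContractiveLp (d : ℕ) (p : ℝ≥0∞) (Λ : Set (Fin d → ℤ)) : Prop :=
  ∀ (F : Finset (Fin d → ℤ)) (a : (Fin d → ℤ) → ℂ),
    eLpNorm (trigPoly (F.filter (· ∈ Λ)) a) p volume ≤ eLpNorm (trigPoly F a) p volume

/-- `Γ` is a contractive projection set for `H^p(𝕋^d)`:
the projection onto frequencies in `Γ` is contractive on analytic polynomials. -/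
def IsContractiveHp (d : ℕ) (p : ℝ≥0∞) (Γ : Set (Fin d → ℤ)) : Prop :=
  ∀ F : Finset (Fin d → ℤ), ↑F ⊆ NN d → ∀ a : (Fin d → ℤ) → ℂ,
    eLpNorm (trigPoly (F.filter (· ∈ Γ)) a) p volume ≤ eLpNorm (trigPoly F a) p volume

/-- `Γ` has dimension `k`: the subgroup generated by the differences `γ - γ₀` has rank `k`. -/
def HasDim {d : ℕ} (Γ : Set (Fin d → ℤ)) (k : ℕ) : Prop :=
  ∀ γ₀ ∈ Γ, Module.finrank ℤ (Submodule.span ℤ ((· - γ₀) '' Γ)) = k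

/-- `H^p(𝕋^d)` enjoys the contractive restriction property of dimension `k`:
every `k`-dimensional contractive projection set for `H^p(𝕋^d)` is the restriction
of a coset in `ℤ^d` to `ℕ₀^d`. -/
def ContractiveRestrictionProperty (d : ℕ) (p : ℝ≥0∞) (k : ℕ) : Prop :=
  ∀ Γ : Set (Fin d → ℤ), Γ.Nonempty → Γ ⊆ NN d → HasDim Γ k → IsContractiveHp d p Γ →
    ∃ Λ : Set (Fin d → ℤ), IsCoset Λ ∧ Γ = Λ ∩ NN d

/-- The coset `Λ(Γ)` in `ℤ^d` generated by `Γ`. -/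
def cosetGen {d : ℕ} (Γ : Set (Fin d → ℤ)) : Set (Fin d → ℤ) :=
  ⋃ γ₀ ∈ Γ, (γ₀ + ·) '' (AddSubgroup.closure ((· - γ₀) '' Γ) : Set (Fin d → ℤ))

/-- The `n`-extension `E_n(Γ)`: all points of `Λ(Γ) ∩ ℕ₀^d` at distance at most `n` from `Γ`. -/
def Eext {d : ℕ} (n : ℕ) (Γ : Set (Fin d → ℤ)) : Set (Fin d → ℤ) :=
  {lam | lam ∈ cosetGen Γ ∩ NN d ∧ ∃ γ ∈ Γ, ∃ m : (Fin d → ℤ) →₀ ℤ,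
    (↑m.support : Set (Fin d → ℤ)) ⊆ Γ \ {γ} ∧
    lam = γ + ∑ α ∈ m.support, m α • (α - γ) ∧
    (∑ α ∈ m.support, max (m α) 0) ≤ (n : ℤ) ∧
    (∑ α ∈ m.support, max (-(m α)) 0) ≤ (n : ℤ)}

/-- Iterated `n`-extensions `E_n^k(Γ)`. -/
def EextIter {d : ℕ} (n : ℕ) : ℕ → Set (Fin d → ℤ) → Set (Fin d → ℤ)
  | 0, Γ => Eext n Γ
  | (k + 1), Γ => Eext n (EextIter n k Γ)

/-- The `n`-completion `E_n^∞(Γ)`. -/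
def EextInf {d : ℕ} (n : ℕ) (Γ : Set (Fin d → ℤ)) : Set (Fin d → ℤ) :=
  ⋃ k, EextIter n k Γ

/-- Elements of the generated coset differ from a base point by an element of `H`. -/
lemma cosetGen_sub_mem {d : ℕ} {Γ : Set (Fin d → ℤ)} (H : AddSubgroup (Fin d → ℤ))
    (t : Fin d → ℤ) (h : ∀ γ ∈ Γ, γ - t ∈ H) {x : Fin d → ℤ} (hx : x ∈ cosetGen Γ) :
    x - t ∈ H := by
  simp only [cosetGen, Set.mem_iUnion, Set.mem_image] at hx
  obtain ⟨γ, hγ, y, hy, rfl⟩ := hx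
  have hle : AddSubgroup.closure ((· - γ) '' Γ) ≤ H := by
    rw [AddSubgroup.closure_le]
    rintro _ ⟨α, hα, rfl⟩
    have := H.sub_mem (h α hα) (h γ hγ)
    simpa using this
  have := H.add_mem (h γ hγ) (hle hy)
  convert this using 1
  abel

lemma mem_cosetGen {d : ℕ} {Γ : Set (Fin d → ℤ)} {γ x : Fin d → ℤ} (hγ : γ ∈ Γ)
    (hx : x - γ ∈ AddSubgroup.closure ((· - γ) '' Γ)) : x ∈ cosetGen Γ := by
  simp only [cosetGen, Set.mem_iUnion, Set.mem_image]
  exact ⟨γ, hγ, x - γ, hx, by abel⟩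

lemma sum_single_le {d : ℕ} (S : Finset (Fin d → ℤ)) (x : Fin d → ℤ) :
    ∑ α ∈ S, (if x = α then (1 : ℤ) else 0) ≤ 1 := by
  rw [Finset.sum_ite_eq]
  split_ifs <;> norm_num

/-- The five-point move. -/
lemma Eext_move {d : ℕ} {Γ : Set (Fin d → ℤ)} {x y z w v : Fin d → ℤ}
    (hx : x ∈ Γ) (hy : y ∈ Γ) (hz : z ∈ Γ) (hw : w ∈ Γ) (hv : v ∈ Γ)
    (hN : x + y + z - w - v ∈ NN d) : x + y + z - w - v ∈ Eext 2 Γ := by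
  refine ⟨⟨mem_cosetGen hz ?_, hN⟩, z, hz, ?_⟩
  · have key : ∀ a ∈ Γ, a - z ∈ AddSubgroup.closure ((· - z) '' Γ) := fun a ha =>
      AddSubgroup.subset_closure ⟨a, ha, rfl⟩
    have := sub_mem (sub_mem (add_mem (key x hx) (key y hy)) (key w hw)) (key v hv)
    convert this using 1
    abel
  · set f : (Fin d → ℤ) →₀ ℤ := Finsupp.single x 1 + Finsupp.single y 1
      - Finsupp.single w 1 - Finsupp.single v 1 with hf
    have hfa : ∀ α, f α = (if x = α then 1 else 0) + (if y = α then 1 else 0)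
        - (if w = α then 1 else 0) - (if v = α then 1 else 0) := by
      intro α
      simp [hf, Finsupp.single_apply]
    have hsub : ∀ α ∈ (f.erase z).support, α ≠ z ∧ f α ≠ 0 := by
      intro α hα
      rw [Finsupp.support_erase, Finset.mem_erase] at hα
      exact ⟨hα.1, by simpa using hα.2⟩
    refine ⟨f.erase z, ?_, ?_, ?_, ?_⟩
    · intro α hα
      obtain ⟨h1, h2⟩ := hsub α hα
      refine ⟨?_, h1⟩
      by_contra hn
      apply h2
      rw [hfa]
      have e1 : x ≠ α := fun h => hn (h ▸ hx)
      have e2 : y ≠ α := fun h => hn (h ▸ hy)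
      have e3 : w ≠ α := fun h => hn (h ▸ hw)
      have e4 : v ≠ α := fun h => hn (h ▸ hv)
      simp [e1, e2, e3, e4]
    · have h1 : ∑ α ∈ (f.erase z).support, (f.erase z) α • (α - z)
          = f.sum (fun α m => m • (α - z)) := by
        rw [Finsupp.sum, Finsupp.support_erase]
        by_cases hzs : z ∈ f.support
        · rw [← Finset.add_sum_erase _ _ hzs]
          simp only [sub_self, smul_zero, zero_add]
          refine Finset.sum_congr rfl fun α hα => ?_
          rw [Finsupp.erase_ne (Finset.ne_of_mem_erase hα)]
        · rw [Finset.erase_eq_of_notMem hzs]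
          refine Finset.sum_congr rfl fun α hα => ?_
          have hne : α ≠ z := by
            rintro rfl
            exact hzs hα
          rw [Finsupp.erase_ne hne]
      have h2 : f.sum (fun α m => m • (α - z)) = (x - z) + (y - z) - (w - z) - (v - z) := by
        rw [hf, Finsupp.sum_sub_index (fun _ _ _ => sub_smul _ _ _),
          Finsupp.sum_sub_index (fun _ _ _ => sub_smul _ _ _),
          Finsupp.sum_add_index' (h := fun α m => m • (α - z)) (fun _ => zero_smul _ _)
            (fun _ _ _ => add_smul _ _ _)]
        simp
      rw [h1, h2]
      abel
    · calc ∑ α ∈ (f.erase z).support, max ((f.erase z) α) 0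
          ≤ ∑ α ∈ (f.erase z).support,
            ((if x = α then (1 : ℤ) else 0) + (if y = α then (1 : ℤ) else 0)) := by
            refine Finset.sum_le_sum fun α hα => ?_
            rw [Finsupp.erase_ne (hsub α hα).1, hfa]
            split_ifs <;> norm_num
        _ ≤ 1 + 1 := by
            rw [Finset.sum_add_distrib]
            exact add_le_add (sum_single_le _ _) (sum_single_le _ _)
        _ = _ := by norm_num
    · calc ∑ α ∈ (f.erase z).support, max (-((f.erase z) α)) 0
          ≤ ∑ α ∈ (f.erase z).support,
            ((if w = α then (1 : ℤ) else 0) + (if v = α then (1 : ℤ) else 0)) := by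
            refine Finset.sum_le_sum fun α hα => ?_
            rw [Finsupp.erase_ne (hsub α hα).1, hfa]
            split_ifs <;> norm_num
        _ ≤ 1 + 1 := by
            rw [Finset.sum_add_distrib]
            exact add_le_add (sum_single_le _ _) (sum_single_le _ _)
        _ = _ := by norm_num

lemma subset_Eext {d : ℕ} {Γ : Set (Fin d → ℤ)} (h : Γ ⊆ NN d) : Γ ⊆ Eext 2 Γ := by
  intro x hx
  have e : x + x + x - x - x = x := by abel
  have := Eext_move hx hx hx hx hx (by rw [e]; exact h hx)
  rwa [e] at this

lemma Eext_subset_NN {d : ℕ} (n : ℕ) (Γ : Set (Fin d → ℤ)) : Eext n Γ ⊆ NN d :=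
  fun _ h => h.1.2

lemma EextIter_subset_NN {d : ℕ} (n k : ℕ) (Γ : Set (Fin d → ℤ)) : EextIter n k Γ ⊆ NN d := by
  cases k <;> exact Eext_subset_NN _ _

lemma EextIter_mono {d : ℕ} (Γ : Set (Fin d → ℤ)) : Monotone (fun k => EextIter 2 k Γ) :=
  monotone_nat_of_le_succ fun k => subset_Eext (EextIter_subset_NN 2 k Γ)

lemma EextInf_move {d : ℕ} {Γ : Set (Fin d → ℤ)} {x y z w v : Fin d → ℤ}
    (hx : x ∈ EextInf 2 Γ) (hy : y ∈ EextInf 2 Γ) (hz : z ∈ EextInf 2 Γ)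
    (hw : w ∈ EextInf 2 Γ) (hv : v ∈ EextInf 2 Γ)
    (hN : x + y + z - w - v ∈ NN d) : x + y + z - w - v ∈ EextInf 2 Γ := by
  simp only [EextInf, Set.mem_iUnion] at hx hy hz hw hv ⊢
  obtain ⟨a, hx⟩ := hx
  obtain ⟨b, hy⟩ := hy
  obtain ⟨c, hz⟩ := hz
  obtain ⟨e, hw⟩ := hw
  obtain ⟨f, hv⟩ := hv
  have M := EextIter_mono Γ
  refine ⟨a + b + c + e + f + 1, Eext_move (M ?_ hx) (M ?_ hy) (M ?_ hz) (M ?_ hw) (M ?_ hv) hN⟩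
    <;> omega

/-- Descent on the barycentric coordinates of the target point. -/
lemma descent {d : ℕ} (C : Set (Fin d → ℤ)) (hC : C ⊆ NN d)
    (move : ∀ x y z w v, x ∈ C → y ∈ C → z ∈ C → w ∈ C → v ∈ C →
      x + y + z - w - v ∈ NN d → x + y + z - w - v ∈ C) (n : ℕ) :
    ∀ (p q r l : Fin d → ℤ) (a b c : ℤ), p ∈ C → q ∈ C → r ∈ C → l ∈ NN d →
      a + b + c = 1 → (∀ j, l j = a * p j + b * q j + c * r j) →
      |a| + |b| + |c| ≤ n → l ∈ C := by
  induction n with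
  | zero =>
    intro p q r l a b c hp hq hr hl hs he hn
    exfalso
    push_cast at hn
    have := le_abs_self a
    have := le_abs_self b
    have := le_abs_self c
    linarith
  | succ n ih =>
    -- first sign pattern: one negative coordinate, the others nonnegative
    have A : ∀ (p q r l : Fin d → ℤ) (a b c : ℤ), p ∈ C → q ∈ C → r ∈ C → l ∈ NN d →
        a + b + c = 1 → (∀ j, l j = a * p j + b * q j + c * r j) →
        |a| + |b| + |c| ≤ ((n + 1 : ℕ) : ℤ) → a < 0 → 0 < b → 0 < c → l ∈ C := by
      intro p q r l a b c hp hq hr hl hs he hn ha hb hc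
      push_cast at hn
      rw [abs_of_neg ha, abs_of_pos hb, abs_of_pos hc] at hn
      have hsN : q + r + r - r - p ∈ NN d := by
        intro j
        have h1 := hl j
        have h2 := hC hq j
        have h3 := hC hr j
        have h4 := he j
        simp only [Pi.add_apply, Pi.sub_apply]
        have h5 : 0 ≤ (-a) * (q j + r j + r j - r j - p j) := by
          nlinarith [mul_nonneg (show 0 ≤ -a - b by omega) h2,
            mul_nonneg (show 0 ≤ -a - c by omega) h3]
        exact nonneg_of_mul_nonneg_right h5 (by omega)
      have hsC := move q r r r p hq hr hr hr hp hsN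
      refine ih _ q r l (-a) (b + a) (c + a) hsC hq hr hl (by omega) ?_ ?_
      · intro j
        rw [he j]
        simp only [Pi.add_apply, Pi.sub_apply]
        ring
      · rw [abs_of_pos (by omega : 0 < -a), abs_of_nonpos (by omega : b + a ≤ 0),
          abs_of_nonpos (by omega : c + a ≤ 0)]
        omega
    -- second sign pattern: two nonpositive coordinates, with `a ≤ b`, `a < 0`
    have B : ∀ (p q r l : Fin d → ℤ) (a b c : ℤ), p ∈ C → q ∈ C → r ∈ C → l ∈ NN d →
        a + b + c = 1 → (∀ j, l j = a * p j + b * q j + c * r j) →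
        |a| + |b| + |c| ≤ ((n + 1 : ℕ) : ℤ) → a < 0 → a ≤ b → b ≤ 0 → l ∈ C := by
      intro p q r l a b c hp hq hr hl hs he hn ha hab hb
      have hc : 0 < c := by omega
      push_cast at hn
      rw [abs_of_neg ha, abs_of_nonpos hb, abs_of_pos hc] at hn
      rcases hab.lt_or_eq with hab | hab
      · have hsN : r + r + r - r - p ∈ NN d := by
          intro j
          have h1 := hl j
          have h2 := hC hq j
          have h3 := hC hr j
          have h4 := he j
          simp only [Pi.add_apply, Pi.sub_apply]
          have h5 : 0 ≤ (-a) * (r j + r j + r j - r j - p j) := by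
            have : c = 1 - a - b := by omega
            subst this
            nlinarith [mul_nonneg (show 0 ≤ -b by omega) h2,
              mul_nonneg (show 0 ≤ b - a - 1 by omega) h3]
          exact nonneg_of_mul_nonneg_right h5 (by omega)
        have hsC := move r r r r p hr hr hr hr hp hsN
        refine ih _ q r l (-a) b (c + 2 * a) hsC hq hr hl (by omega) ?_ ?_
        · intro j
          rw [he j]
          simp only [Pi.add_apply, Pi.sub_apply]
          ring
        · rw [abs_of_pos (by omega : 0 < -a), abs_of_nonpos hb,
            abs_of_nonpos (by omega : c + 2 * a ≤ 0)]
          omega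
      · subst hab
        have hsN : r + r + r - p - q ∈ NN d := by
          intro j
          have h1 := hl j
          have h3 := hC hr j
          have h4 := he j
          simp only [Pi.add_apply, Pi.sub_apply]
          have h5 : 0 ≤ (-a) * (r j + r j + r j - p j - q j) := by
            have : c = 1 - a - a := by omega
            subst this
            nlinarith [mul_nonneg (show 0 ≤ -a - 1 by omega) h3]
          exact nonneg_of_mul_nonneg_right h5 (by omega)
        have hsC := move r r r p q hr hr hr hp hq hsN
        refine ih _ q r l (-a) 0 (1 + a) hsC hq hr hl (by omega) ?_ ?_
        · intro j
          have : c = 1 - a - a := by omega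
          rw [he j, this]
          simp only [Pi.add_apply, Pi.sub_apply]
          ring
        · rw [abs_of_pos (by omega : 0 < -a), abs_zero,
            abs_of_nonpos (by omega : 1 + a ≤ 0)]
          omega
    -- symmetrised version of the second pattern
    have D : ∀ (p q r l : Fin d → ℤ) (a b c : ℤ), p ∈ C → q ∈ C → r ∈ C → l ∈ NN d →
        a + b + c = 1 → (∀ j, l j = a * p j + b * q j + c * r j) →
        |a| + |b| + |c| ≤ ((n + 1 : ℕ) : ℤ) → a ≤ 0 → b ≤ 0 → l ∈ C := by
      intro p q r l a b c hp hq hr hl hs he hn ha hb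
      by_cases h0 : a = 0 ∧ b = 0
      · obtain ⟨rfl, rfl⟩ := h0
        have : c = 1 := by omega
        subst this
        have : l = r := by
          funext j
          rw [he j]
          ring
        rwa [this]
      · rcases le_total a b with h | h
        · exact B p q r l a b c hp hq hr hl hs he hn (by omega) h hb
        · exact B q p r l b a c hq hp hr hl (by omega) (fun j => by rw [he j]; ring)
            (by linarith) (by omega) h ha
    intro p q r l a b c hp hq hr hl hs he hn
    rcases lt_or_ge 0 a with ha | ha <;> rcases lt_or_ge 0 b with hb | hb <;>
      rcases lt_or_ge 0 c with hc | hc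
    · omega
    · exact A r p q l c a b hr hp hq hl (by omega) (fun j => by rw [he j]; ring)
        (by linarith) (by omega) ha hb
    · exact A q p r l b a c hq hp hr hl (by omega) (fun j => by rw [he j]; ring)
        (by linarith) (by omega) ha hc
    · exact D q r p l b c a hq hr hp hl (by omega) (fun j => by rw [he j]; ring)
        (by linarith) hb hc
    · exact A p q r l a b c hp hq hr hl hs he hn (by omega) hb hc
    · exact D p r q l a c b hp hr hq hl (by omega) (fun j => by rw [he j]; ring)
        (by linarith) ha hc
    · exact D p q r l a b c hp hq hr hl hs he hn ha hb
    · omega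

/-- For `d ≥ 3` and three affinely independent points in `ℕ₀^d`, the `2`-completion
is `Λ(T) ∩ ℕ₀^d`. -/
theorem two_completion_three_points (d : ℕ) (hd : 3 ≤ d) (t₀ t₁ t₂ : Fin d → ℤ)
    (h₀ : t₀ ∈ NN d) (h₁ : t₁ ∈ NN d) (h₂ : t₂ ∈ NN d)
    (hind : LinearIndependent ℚ
      ![fun j => ((t₁ - t₀) j : ℚ), fun j => ((t₂ - t₀) j : ℚ)]) :
    EextInf 2 {t₀, t₁, t₂} = cosetGen {t₀, t₁, t₂} ∩ NN d := by
  have hT : ({t₀, t₁, t₂} : Set (Fin d → ℤ)) ⊆ NN d := by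
    rintro x (rfl | rfl | rfl) <;> assumption
  have hTC : ({t₀, t₁, t₂} : Set (Fin d → ℤ)) ⊆ EextInf 2 {t₀, t₁, t₂} := fun x hx =>
    Set.mem_iUnion.2 ⟨0, subset_Eext hT hx⟩
  have hCN : EextInf 2 {t₀, t₁, t₂} ⊆ NN d := Set.iUnion_subset fun k =>
    EextIter_subset_NN 2 k _
  apply Set.Subset.antisymm
  · intro x hx
    refine ⟨mem_cosetGen (γ := t₀) (by simp) ?_, hCN hx⟩
    obtain ⟨k, hk⟩ := Set.mem_iUnion.1 hx
    clear hx
    induction k generalizing x with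
    | zero =>
      refine cosetGen_sub_mem _ t₀ (fun γ hγ => ?_) hk.1.1
      exact AddSubgroup.subset_closure ⟨γ, hγ, rfl⟩
    | succ k ih =>
      exact cosetGen_sub_mem _ t₀ (fun γ hγ => ih hγ) hk.1.1
  · rintro x ⟨hx, hxN⟩
    have h := cosetGen_sub_mem (AddSubgroup.closure {t₁ - t₀, t₂ - t₀}) t₀ (by
      rintro γ (rfl | rfl | rfl)
      · rw [sub_self]
        exact zero_mem _
      · exact AddSubgroup.subset_closure (by simp)
      · exact AddSubgroup.subset_closure (by simp)) hx
    rw [AddSubgroup.mem_closure_pair] at h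
    obtain ⟨a, b, hab⟩ := h
    refine descent (EextInf 2 {t₀, t₁, t₂}) hCN
      (fun x y z w v hx hy hz hw hv hN => EextInf_move hx hy hz hw hv hN)
      (|1 - a - b| + |a| + |b|).toNat t₀ t₁ t₂ x (1 - a - b) a b
      (hTC (by simp)) (hTC (by simp)) (hTC (by simp)) hxN (by ring) ?_ ?_
    · intro j
      have := congrFun hab j
      simp only [Pi.add_apply, Pi.smul_apply, Pi.sub_apply, smul_eq_mul] at this
      linarith
    · exact Int.self_le_toNat _

end
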